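/- arXiv:0904.2940 — 4 statements merged into one kernel-verified Lean document; each statement's English description precedes it below -/
import Mathlib

section
/- Let B₁ and B₂ be real normed spaces and let U₁ ⊆ B₁, U₂ ⊆ B₂ be non-empty open subsets. Let T : U₁ → U₂ be a surjective isometry (i.e., ‖T(f) − T(g)‖ = ‖f − g‖ for all f, g ∈ U₁). If f, g ∈ U₁ satisfy (1−r)f + rg ∈ U₁ for every real r with 0 ≤ r ≤ 1, then T((f+g)/2) = (T(f) + T(g))/2. -/
/-!
The proof localizes Väisälä's argument for the Mazur–Ulam theorem. For points `x`, `y` of a normed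
space, the set `midSet x y` of metric midpoints of `x` and `y` is bounded, and the point reflection
in `midpoint ℝ x y` is an isometry `R` of it with `dist (R u) u = 2 * dist u (midpoint ℝ x y)`. In a
bounded metric space, the centre of such a reflection is fixed by every surjective isometry
(`isometryEquiv_fixes_center`), so an isometry from `midSet x y` onto `midSet (T x) (T y)` must
match the two centres (`isometryEquiv_map_center`).

If closed balls of radius `dist x y / 2` about `x` and `T x` lie in `U₁` and `U₂`, then `T` does
restrict to such an isometry, and hence preserves the midpoint of `x` and `y` (`map_midpoint_local`).
By compactness of the segment and of its image, there is a uniform `δ > 0` such that this applies to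
all points of the segment at distance at most `2 * δ`. Cutting the segment into `2 * m` short equal
pieces, the images of the subdivision points satisfy `2 • p (k + 1) = p k + p (k + 2)`, so they form
an arithmetic progression, and its middle term is the average of the extreme ones.
-/

/-- In a bounded metric space, let `R` be an isometry acting like a reflection in `z`, in that it
moves each point by twice its distance to `z`. Then every surjective isometry fixes `z`: replacing
`e` by `R ∘ e⁻¹ ∘ R ∘ e` doubles the displacement of `z`, which is bounded. -/
theorem isometryEquiv_fixes_center {X : Type*} [MetricSpace X] [BoundedSpace X]
    (R : X ≃ᵢ X) (z : X) (hR : ∀ u, dist (R u) u = 2 * dist u z) (e : X ≃ᵢ X) : e z = z := by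
  have hRz : R z = z := by
    have := hR z
    rwa [dist_self, mul_zero, dist_eq_zero] at this
  have h_bdd : BddAbove (Set.range fun e : X ≃ᵢ X => dist (e z) z) := by
    refine ⟨Metric.diam (Set.univ : Set X), ?_⟩
    rintro _ ⟨e, rfl⟩
    exact Metric.dist_le_diam_of_mem (Bornology.IsBounded.all _) (Set.mem_univ _) (Set.mem_univ _)
  have hdouble : ∀ e : X ≃ᵢ X,
      dist ((((e.trans R).trans e.symm).trans R) z) z = 2 * dist (e z) z := by
    intro e
    simp only [IsometryEquiv.trans_apply]
    conv_lhs => rw [← hRz]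
    rw [R.dist_eq, hRz, ← e.dist_eq, e.apply_symm_apply, hR]
  have hle : (⨆ e : X ≃ᵢ X, dist (e z) z) ≤ (⨆ e : X ≃ᵢ X, dist (e z) z) / 2 := by
    have : Nonempty (X ≃ᵢ X) := ⟨IsometryEquiv.refl X⟩
    apply ciSup_le
    intro e
    rw [le_div_iff₀' (zero_lt_two' ℝ), ← hdouble]
    exact le_ciSup h_bdd (((e.trans R).trans e.symm).trans R)
  have h1 := le_ciSup h_bdd e
  exact dist_le_zero.1 (h1.trans (by linarith))

/-- A surjective isometry from a bounded metric space, with reflections on both sides, maps centre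
to centre: conjugating `R'` by `T` gives a self-isometry of `X`, which therefore fixes `z`. -/
theorem isometryEquiv_map_center {X Y : Type*} [MetricSpace X] [BoundedSpace X] [MetricSpace Y]
    (R : X ≃ᵢ X) (z : X) (hR : ∀ u, dist (R u) u = 2 * dist u z)
    (R' : Y ≃ᵢ Y) (z' : Y) (hR' : ∀ u, dist (R' u) u = 2 * dist u z')
    (T : X ≃ᵢ Y) : T z = z' := by
  have h := isometryEquiv_fixes_center R z hR ((T.trans R').trans T.symm)
  simp only [IsometryEquiv.trans_apply] at h
  have h2 : R' (T z) = T z := by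
    rw [← T.apply_symm_apply (R' (T z)), h]
  have h3 := hR' (T z)
  rw [h2, dist_self] at h3
  exact dist_eq_zero.1 (by linarith)

/-- The set of metric midpoints of `x` and `y`: the points at distance `dist x y / 2` from both. -/
def midSet {E : Type*} [MetricSpace E] (x y : E) : Set E :=
  {u | dist u x = dist x y / 2 ∧ dist u y = dist x y / 2}

instance {E : Type*} [MetricSpace E] (x y : E) : BoundedSpace (midSet x y) := by
  rw [boundedSpace_subtype_iff]
  exact Metric.isBounded_closedBall.subset fun u hu => Metric.mem_closedBall.2 hu.1.le

section NormedSpace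

variable {E : Type*} [NormedAddCommGroup E] [NormedSpace ℝ E]

theorem midpoint_mem_midSet (x y : E) : midpoint ℝ x y ∈ midSet x y := by
  constructor
  · rw [dist_midpoint_left, Real.norm_ofNat]; ring
  · rw [dist_midpoint_right, Real.norm_ofNat]; ring

theorem pointReflection_mem_midSet {x y u : E} (hu : u ∈ midSet x y) :
    AffineIsometryEquiv.pointReflection ℝ (midpoint ℝ x y) u ∈ midSet x y := by
  set R := AffineIsometryEquiv.pointReflection ℝ (midpoint ℝ x y) with hR
  have hx : R x = y := by simp [hR]
  have hy : R y = x := by simp [hR]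
  constructor
  · rw [← hu.2, ← R.dist_map u y, hy]
  · rw [← hu.1, ← R.dist_map u x, hx]

/-- The point reflection in `midpoint ℝ x y`, as an isometry of the set of metric midpoints. -/
noncomputable def midSetReflection (x y : E) : midSet x y ≃ᵢ midSet x y :=
  IsometryEquiv.mk'
    (fun u => ⟨AffineIsometryEquiv.pointReflection ℝ (midpoint ℝ x y) u,
      pointReflection_mem_midSet u.2⟩)
    (fun u => ⟨AffineIsometryEquiv.pointReflection ℝ (midpoint ℝ x y) u,
      pointReflection_mem_midSet u.2⟩)
    (fun u => Subtype.ext (AffineIsometryEquiv.pointReflection_involutive (𝕜 := ℝ) _ u.1))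
    (Isometry.of_dist_eq fun u v =>
      (AffineIsometryEquiv.pointReflection ℝ (midpoint ℝ x y)).dist_map u.1 v.1)

theorem dist_midSetReflection (x y : E) (u : midSet x y) :
    dist (midSetReflection x y u) u = 2 * dist u ⟨midpoint ℝ x y, midpoint_mem_midSet x y⟩ := by
  change dist (AffineIsometryEquiv.pointReflection ℝ (midpoint ℝ x y) u.1) u.1
    = 2 * dist u.1 (midpoint ℝ x y)
  rw [AffineIsometryEquiv.dist_pointReflection_self_real, dist_comm]

/-- A surjective isometry `T : U → V` preserves the midpoint of `x` and `y` as soon as `U` and `V`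
contain the closed balls of radius `dist x y / 2` about `x` and `T x`: these balls contain all
metric midpoints, so that `T` maps `midSet x y` onto `midSet (T x) (T y)`. -/
theorem map_midpoint_local {F : Type*} [NormedAddCommGroup F] [NormedSpace ℝ F]
    {U : Set E} {V : Set F} {T : E → F} (hsurj : ∀ v ∈ V, ∃ u ∈ U, T u = v)
    (hiso : ∀ u ∈ U, ∀ v ∈ U, dist (T u) (T v) = dist u v) {x y : E} (hx : x ∈ U) (hy : y ∈ U)
    (hU : Metric.closedBall x (dist x y / 2) ⊆ U)
    (hV : Metric.closedBall (T x) (dist x y / 2) ⊆ V) :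
    T (midpoint ℝ x y) = midpoint ℝ (T x) (T y) := by
  have hxy := hiso x hx y hy
  have hmem : ∀ u ∈ midSet x y, u ∈ U := fun u hu => hU (Metric.mem_closedBall.2 hu.1.le)
  have hmaps : ∀ u ∈ midSet x y, T u ∈ midSet (T x) (T y) := fun u hu =>
    ⟨by rw [hiso u (hmem u hu) x hx, hxy, hu.1], by rw [hiso u (hmem u hu) y hy, hxy, hu.2]⟩
  have hback : ∀ v : midSet (T x) (T y), ∃ u : midSet x y, T u = v := by
    rintro ⟨v, hv⟩
    obtain ⟨u, hu, rfl⟩ := hsurj v (hV (Metric.mem_closedBall.2 (by rw [hv.1, hxy])))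
    refine ⟨⟨u, ?_, ?_⟩, rfl⟩
    · rw [← hiso u hu x hx, hv.1, hxy]
    · rw [← hiso u hu y hy, hv.2, hxy]
  choose S hS using hback
  let e : midSet x y ≃ᵢ midSet (T x) (T y) :=
    IsometryEquiv.mk' (fun u => ⟨T u, hmaps u u.2⟩) S (fun v => Subtype.ext (hS v))
      (Isometry.of_dist_eq fun u v => hiso u (hmem u u.2) v (hmem v v.2))
  exact congrArg Subtype.val (isometryEquiv_map_center _ _ (dist_midSetReflection x y) _ _
    (dist_midSetReflection (T x) (T y)) e)

/-- In a sequence whose terms up to index `2 * m` are each the midpoint of their neighbours, the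
`m`-th term is the midpoint of the extreme ones. -/
theorem eq_midpoint_of_succ_eq_midpoint {m : ℕ} (hm : 0 < m) {p : ℕ → E}
    (hp : ∀ k, k + 2 ≤ 2 * m → p (k + 1) = midpoint ℝ (p k) (p (k + 2))) :
    p m = midpoint ℝ (p 0) (p (2 * m)) := by
  have hstep : ∀ k, k + 1 ≤ 2 * m → p (k + 1) = p k + (p 1 - p 0) := by
    intro k
    induction k with
    | zero => intro _; simp
    | succ k ih =>
      intro hk
      have h1 := ih (by omega)
      have h2 := (midpoint_eq_iff' ℝ).1 (hp k hk).symm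
      rw [Equiv.pointReflection_apply, vsub_eq_sub, vadd_eq_add] at h2
      rw [← h2, h1]
      abel
  have hap : ∀ k, k ≤ 2 * m → p k = p 0 + (k : ℝ) • (p 1 - p 0) := by
    intro k
    induction k with
    | zero => intro _; simp
    | succ k ih =>
      intro hk
      rw [hstep k hk, ih (by omega)]
      push_cast
      module
  rw [hap m (by omega), hap (2 * m) le_rfl, midpoint_eq_smul_add, invOf_eq_inv]
  push_cast
  module

end NormedSpace

/-- **Local Mazur–Ulam lemma.** If `T` is a surjective isometry between nonempty open
subsets `U₁`, `U₂` of real normed spaces and the segment from `f` to `g` lies in `U₁`,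
then `T` sends the midpoint of `f` and `g` to the midpoint of `T f` and `T g`. -/
theorem stmt_0 {B₁ B₂ : Type*} [NormedAddCommGroup B₁] [NormedSpace ℝ B₁]
    [NormedAddCommGroup B₂] [NormedSpace ℝ B₂]
    (U₁ : Set B₁) (U₂ : Set B₂) (hU₁open : IsOpen U₁) (hU₂open : IsOpen U₂)
    (hU₁ne : U₁.Nonempty) (hU₂ne : U₂.Nonempty)
    (T : B₁ → B₂) (hmaps : ∀ x ∈ U₁, T x ∈ U₂)
    (hsurj : ∀ y ∈ U₂, ∃ x ∈ U₁, T x = y)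
    (hiso : ∀ x ∈ U₁, ∀ y ∈ U₁, ‖T x - T y‖ = ‖x - y‖)
    (f g : B₁) (hf : f ∈ U₁) (hg : g ∈ U₁)
    (hseg : ∀ r : ℝ, 0 ≤ r → r ≤ 1 → (1 - r) • f + r • g ∈ U₁) :
    T ((2⁻¹ : ℝ) • (f + g)) = (2⁻¹ : ℝ) • (T f + T g) := by
  have hdist : ∀ x ∈ U₁, ∀ y ∈ U₁, dist (T x) (T y) = dist x y := fun x hx y hy => by
    rw [dist_eq_norm, dist_eq_norm, hiso x hx y hy]
  have hTcont : ContinuousOn T U₁ :=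
    (LipschitzOnWith.of_dist_le_mul (K := 1) fun x hx y hy => by
      rw [hdist x hx y hy, NNReal.coe_one, one_mul]).continuousOn
  let c : ℝ → B₁ := fun r => (1 - r) • f + r • g
  have hc : Continuous c := by fun_prop
  set K := c '' Set.Icc 0 1 with hK
  have hKc : IsCompact K := isCompact_Icc.image hc
  have hKU : K ⊆ U₁ := by
    rintro _ ⟨r, hr, rfl⟩
    exact hseg r hr.1 hr.2
  obtain ⟨δ₁, hδ₁, hU⟩ := hKc.exists_cthickening_subset_open hU₁open hKU
  obtain ⟨δ₂, hδ₂, hV⟩ := (hKc.image_of_continuousOn (hTcont.mono hKU)).exists_cthickening_subset_open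
    hU₂open (by rintro _ ⟨x, hx, rfl⟩; exact hmaps x (hKU hx))
  have hshort : ∀ x ∈ K, ∀ y ∈ K, dist x y / 2 ≤ min δ₁ δ₂ →
      T (midpoint ℝ x y) = midpoint ℝ (T x) (T y) := by
    intro x hx y hy hxy
    refine map_midpoint_local hsurj hdist (hKU hx) (hKU hy) ?_ ?_
    · exact ((Metric.closedBall_subset_closedBall (hxy.trans (min_le_left _ _))).trans
        (Metric.closedBall_subset_cthickening hx _)).trans hU
    · exact ((Metric.closedBall_subset_closedBall (hxy.trans (min_le_right _ _))).trans
        (Metric.closedBall_subset_cthickening (Set.mem_image_of_mem T hx) _)).trans hV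
  have hδ : 0 < min δ₁ δ₂ := lt_min hδ₁ hδ₂
  obtain ⟨m, hm⟩ := exists_nat_gt (dist f g / min δ₁ δ₂)
  have hm0 : (0 : ℝ) < m := lt_of_le_of_lt (by positivity) hm
  have hmδ : dist f g < m * min δ₁ δ₂ := (div_lt_iff₀ hδ).1 hm
  have hcK : ∀ k : ℕ, k ≤ 2 * m → c (k / (2 * m)) ∈ K := by
    intro k hk
    refine Set.mem_image_of_mem c ⟨by positivity, (div_le_one (by positivity)).2 ?_⟩
    exact_mod_cast hk
  have key := eq_midpoint_of_succ_eq_midpoint (by exact_mod_cast hm0)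
    (p := fun k : ℕ => T (c (k / (2 * m)))) (m := m) (by
      intro k hk
      have hmid : c ((k + 1 : ℕ) / (2 * m))
          = midpoint ℝ (c (k / (2 * m))) (c ((k + 2 : ℕ) / (2 * m))) := by
        simp only [c, midpoint_eq_smul_add, invOf_eq_inv]
        push_cast
        module
      have hd : dist (c (k / (2 * m))) (c ((k + 2 : ℕ) / (2 * m))) = dist f g / m := by
        have : c (k / (2 * m)) - c ((k + 2 : ℕ) / (2 * m)) = (m : ℝ)⁻¹ • (f - g) := by
          have h2 : ((k + 2 : ℕ) : ℝ) / (2 * m) = k / (2 * m) + (m : ℝ)⁻¹ := by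
            push_cast
            field_simp
          simp only [c, h2]
          module
        rw [dist_eq_norm, this, norm_smul, Real.norm_of_nonneg (by positivity), dist_eq_norm,
          div_eq_inv_mul]
      change T (c ((k + 1 : ℕ) / (2 * m))) = _
      rw [hmid]
      refine hshort _ (hcK k (by omega)) _ (hcK (k + 2) hk) ?_
      rw [hd]
      have : dist f g / m ≤ min δ₁ δ₂ := (div_le_iff₀' hm0).2 hmδ.le
      linarith)
  have e0 : c ((0 : ℕ) / (2 * m)) = f := by simp [c]
  have e1 : c ((2 * m : ℕ) / (2 * m)) = g := by
    have : ((2 * m : ℕ) : ℝ) / (2 * m) = 1 := by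
      push_cast
      exact div_self (by positivity)
    simp only [c, this]
    simp
  have em : c (m / (2 * m)) = (2⁻¹ : ℝ) • (f + g) := by
    have : (m : ℝ) / (2 * m) = 2⁻¹ := by field_simp
    simp only [c, this]
    module
  simp only [e0, e1, em] at key
  rw [key, midpoint_eq_smul_add, invOf_eq_inv]
end

section
/- Let B₁ and B₂ be real normed spaces, U₁ ⊆ B₁ and U₂ ⊆ B₂ non-empty open subsets, and T : U₁ → U₂ a surjective isometry. Let h, h′ ∈ U₁ and suppose ε > 0 satisfies ‖h − h′‖/2 < ε, the set {u ∈ B₁ : ‖u − h‖ < ε and ‖u − h′‖ < ε} is contained in U₁, and the set {a ∈ B₂ : ‖a − T(h)‖ < ε and ‖a − T(h′)‖ < ε} is contained in U₂. Then T((h+h′)/2) = (T(h) + T(h′))/2. -/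
/-!
This is Väisälä's reflection argument for the Mazur–Ulam theorem, carried out inside a lens
`ball a ε ∩ ball b ε`. The lens need not contain `a` and `b`, so instead of isometries fixing
`a` and `b` one uses isometric self-bijections of the lens preserving the distance to `a` and the
distance to `b`. For such an `e`, and `R` the reflection in the midpoint `z`, the map
`R ∘ e⁻¹ ∘ R ∘ e` is of the same kind (`R` swaps the two distances) and moves `z` exactly twice as
far as `e`. These displacements are bounded by `2 * dist a z`, so they all vanish
(`LensMU.fixes_center`).

The hypotheses on the lenses make `T` restrict to an isometric bijection `τ` from the lens of
`h, h'` onto the lens of `T h, T h'`. With `R₁, R₂` the two reflections,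
`R₁ ∘ τ⁻¹ ∘ R₂ ∘ τ` preserves the distances to `h` and `h'`, so it fixes the midpoint `z`. Hence
`τ z` is a fixed point of `R₂`, which is the midpoint of `T h` and `T h'`.
-/

namespace LensMU

/-- The open lens of radius `ε` around `a` and `b`. -/
def lens {E : Type*} [NormedAddCommGroup E] (a b : E) (ε : ℝ) : Set E :=
  {u : E | ‖u - a‖ < ε ∧ ‖u - b‖ < ε}

section

variable {E : Type*} [NormedAddCommGroup E]

theorem norm_refl_sub_left (a b u : E) : ‖a + b - u - a‖ = ‖u - b‖ := by
  rw [← norm_neg]; congr 1; abel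

theorem norm_refl_sub_right (a b u : E) : ‖a + b - u - b‖ = ‖u - a‖ := by
  rw [← norm_neg]; congr 1; abel

/-- The point reflection `u ↦ a + b - u` in the midpoint of `a` and `b`, restricted to the lens. -/
def refl (a b : E) (ε : ℝ) : lens a b ε ≃ᵢ lens a b ε :=
  IsometryEquiv.mk'
    (fun u => ⟨a + b - u.1, by
      refine ⟨?_, ?_⟩
      · rw [norm_refl_sub_left]; exact u.2.2
      · rw [norm_refl_sub_right]; exact u.2.1⟩)
    (fun u => ⟨a + b - u.1, by
      refine ⟨?_, ?_⟩
      · rw [norm_refl_sub_left]; exact u.2.2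
      · rw [norm_refl_sub_right]; exact u.2.1⟩)
    (fun u => by ext; simp)
    (Isometry.of_dist_eq fun u v => by
      simp only [Subtype.dist_eq, dist_sub_left])

theorem coe_refl (a b : E) (ε : ℝ) (u : lens a b ε) : (refl a b ε u : E) = a + b - u := rfl

variable [NormedSpace ℝ E]

theorem center_sub_left (a b : E) : ‖(2⁻¹ : ℝ) • (a + b) - a‖ = ‖a - b‖ / 2 := by
  have : (2⁻¹ : ℝ) • (a + b) - a = (-2⁻¹ : ℝ) • (a - b) := by module
  rw [this, norm_smul]; norm_num; ring

theorem center_sub_right (a b : E) : ‖(2⁻¹ : ℝ) • (a + b) - b‖ = ‖a - b‖ / 2 := by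
  rw [add_comm, center_sub_left, norm_sub_rev]

theorem center_mem {a b : E} {ε : ℝ} (hd : ‖a - b‖ / 2 < ε) :
    (2⁻¹ : ℝ) • (a + b) ∈ lens a b ε :=
  ⟨by rwa [center_sub_left], by rwa [center_sub_right]⟩

/-- Isometric self-bijections of the lens preserving the distances to `a` and to `b`. -/
def Good (a b : E) (ε : ℝ) (e : lens a b ε ≃ᵢ lens a b ε) : Prop :=
  ∀ u, ‖(e u : E) - a‖ = ‖(u : E) - a‖ ∧ ‖(e u : E) - b‖ = ‖(u : E) - b‖

/-- The displacement of the midpoint `z` is bounded on the good maps, while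
`e ↦ R ∘ e⁻¹ ∘ R ∘ e` preserves goodness and doubles it. -/
theorem fixes_center {a b : E} {ε : ℝ} (z : lens a b ε) (hz : (z : E) = (2⁻¹ : ℝ) • (a + b))
    (e : lens a b ε ≃ᵢ lens a b ε) (he : Good a b ε e) : e z = z := by
  set s := {e : lens a b ε ≃ᵢ lens a b ε | Good a b ε e}
  have hne : Nonempty s := ⟨⟨e, he⟩⟩
  have hbdd : BddAbove (Set.range fun e : s => dist ((e : lens a b ε ≃ᵢ lens a b ε) z) z) := by
    refine ⟨2 * ‖(z : E) - a‖, Set.forall_mem_range.2 ?_⟩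
    rintro ⟨e, he⟩
    calc dist (e z) z ≤ dist (e z : E) a + dist a (z : E) :=
          dist_triangle (e z : E) a z
      _ = 2 * ‖(z : E) - a‖ := by
        rw [dist_eq_norm, dist_eq_norm, (he z).1, norm_sub_rev a]; ring
  set R := refl a b ε
  have hRz : R z = z := by
    ext; rw [coe_refl, hz]; module
  set f : lens a b ε ≃ᵢ lens a b ε → lens a b ε ≃ᵢ lens a b ε :=
    fun e => ((e.trans R).trans e.symm).trans R
  have hfd : ∀ e, dist (f e z) z = 2 * dist (e z) z := by
    intro e
    calc dist (f e z) z = dist (R (e.symm (R (e z)))) (R z) := by rw [hRz]; rfl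
      _ = dist (R (e z)) (e z) := by rw [R.dist_eq, ← e.dist_eq, e.apply_symm_apply]
      _ = 2 * dist (e z) z := by
        rw [Subtype.dist_eq, Subtype.dist_eq, coe_refl, dist_eq_norm, dist_eq_norm]
        have : a + b - (e z : E) - (e z : E) = (-2 : ℝ) • ((e z : E) - z) := by
          rw [hz]; module
        rw [this, norm_smul]; norm_num
  have hfs : ∀ e ∈ s, f e ∈ s := by
    intro e he u
    have h1 := he (e.symm (R (e u)))
    rw [e.apply_symm_apply] at h1
    have h2 : (f e u : E) = a + b - (e.symm (R (e u)) : E) := rfl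
    rw [h2, norm_refl_sub_left, norm_refl_sub_right, ← h1.1, ← h1.2, coe_refl,
      norm_refl_sub_left, norm_refl_sub_right]
    exact he u
  set c := ⨆ e : s, dist ((e : lens a b ε ≃ᵢ lens a b ε) z) z
  have hc : c ≤ c / 2 := by
    refine ciSup_le ?_
    rintro ⟨e, he⟩
    have h1 : dist (f e z) z ≤ c := le_ciSup hbdd ⟨f e, hfs e he⟩
    rw [hfd] at h1
    change dist (e z) z ≤ c / 2
    linarith
  have h1 : dist (e z) z ≤ c := le_ciSup hbdd ⟨e, he⟩
  exact dist_le_zero.1 (by linarith)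

end

/-- An isometric bijection between lenses that carries the distances to `a, b` to the distances
to `a', b'` carries the midpoint to the midpoint. -/
theorem map_center {E F : Type*} [NormedAddCommGroup E] [NormedSpace ℝ E]
    [NormedAddCommGroup F] [NormedSpace ℝ F] {a b : E} {a' b' : F} {ε : ℝ}
    (τ : lens a b ε ≃ᵢ lens a' b' ε)
    (hτ : ∀ u, ‖(τ u : F) - a'‖ = ‖(u : E) - a‖ ∧ ‖(τ u : F) - b'‖ = ‖(u : E) - b‖)
    (z : lens a b ε) (hz : (z : E) = (2⁻¹ : ℝ) • (a + b)) :
    (τ z : F) = (2⁻¹ : ℝ) • (a' + b') := by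
  set R₁ := refl a b ε
  set R₂ := refl a' b' ε
  have hRz : R₁ z = z := by
    ext; rw [coe_refl, hz]; module
  have hfix := fixes_center z hz (((τ.trans R₂).trans τ.symm).trans R₁) (by
    intro u
    have h1 := hτ (τ.symm (R₂ (τ u)))
    rw [τ.apply_symm_apply] at h1
    have h2 : ((((τ.trans R₂).trans τ.symm).trans R₁) u : E)
        = a + b - (τ.symm (R₂ (τ u)) : E) := rfl
    rw [h2, norm_refl_sub_left, norm_refl_sub_right, ← h1.1, ← h1.2, coe_refl,
      norm_refl_sub_left, norm_refl_sub_right]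
    exact hτ u)
  have h3 : R₁ (τ.symm (R₂ (τ z))) = R₁ z := by rw [hRz]; exact hfix
  have h4 : R₂ (τ z) = τ z := by
    rw [← τ.symm_apply_eq]; exact R₁.injective h3
  have h5 : a' + b' - (τ z : F) = τ z := congrArg Subtype.val h4
  rw [sub_eq_iff_eq_add] at h5
  rw [h5]; module

end LensMU

/-- First part of the proof of the local Mazur–Ulam lemma: if `ε > 0` satisfies
`‖h − h′‖/2 < ε`, the open ε-lens around `h, h′` lies in `U₁`, and the open ε-lens
around `T h, T h′` lies in `U₂`, then `T` sends the midpoint of `h` and `h′` to the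
midpoint of `T h` and `T h′`. -/
theorem stmt_1 {B₁ B₂ : Type*} [NormedAddCommGroup B₁] [NormedSpace ℝ B₁]
    [NormedAddCommGroup B₂] [NormedSpace ℝ B₂]
    (U₁ : Set B₁) (U₂ : Set B₂) (hU₁open : IsOpen U₁) (hU₂open : IsOpen U₂)
    (hU₁ne : U₁.Nonempty) (hU₂ne : U₂.Nonempty)
    (T : B₁ → B₂) (hmaps : ∀ x ∈ U₁, T x ∈ U₂)
    (hsurj : ∀ y ∈ U₂, ∃ x ∈ U₁, T x = y)
    (hiso : ∀ x ∈ U₁, ∀ y ∈ U₁, ‖T x - T y‖ = ‖x - y‖)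
    (h h' : B₁) (hh : h ∈ U₁) (hh' : h' ∈ U₁)
    (ε : ℝ) (hε : 0 < ε) (hεd : ‖h - h'‖ / 2 < ε)
    (hlens₁ : {u : B₁ | ‖u - h‖ < ε ∧ ‖u - h'‖ < ε} ⊆ U₁)
    (hlens₂ : {a : B₂ | ‖a - T h‖ < ε ∧ ‖a - T h'‖ < ε} ⊆ U₂) :
    T ((2⁻¹ : ℝ) • (h + h')) = (2⁻¹ : ℝ) • (T h + T h') := by
  have hL : ∀ u ∈ U₁, u ∈ LensMU.lens h h' ε ↔ T u ∈ LensMU.lens (T h) (T h') ε := by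
    intro u hu
    simp only [LensMU.lens, Set.mem_ofPred_eq, hiso u hu h hh, hiso u hu h' hh']
  -- Here `S` is a right inverse of `T` on `U₂`; it supplies the inverse of `τ`.
  choose! S hSU hTS using hsurj
  let τ : LensMU.lens h h' ε ≃ᵢ LensMU.lens (T h) (T h') ε :=
    IsometryEquiv.mk'
      (fun u => ⟨T u, (hL u (hlens₁ u.2)).1 u.2⟩)
      (fun v => ⟨S v, (hL _ (hSU v (hlens₂ v.2))).2 (by rw [hTS v (hlens₂ v.2)]; exact v.2)⟩)
      (fun v => Subtype.ext (hTS v (hlens₂ v.2)))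
      (Isometry.of_dist_eq fun u v => by
        rw [Subtype.dist_eq, Subtype.dist_eq, dist_eq_norm, dist_eq_norm]
        exact hiso u (hlens₁ u.2) v (hlens₁ v.2))
  exact LensMU.map_center τ
    (fun u => ⟨hiso u (hlens₁ u.2) h hh, hiso u (hlens₁ u.2) h' hh'⟩)
    ⟨_, LensMU.center_mem hεd⟩ rfl
end

section
/- Let B be a unital complex Banach algebra and a ∈ B. If the spectral radius r(f·a) equals 0 for every invertible element f ∈ B⁻¹, then a belongs to the Jacobson radical rad(B) of B. -/
/-!
The hypothesis says that `1 + f * a` is invertible for every invertible `f`; equivalently,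
adding a multiple `f * a` with `f` invertible to an invertible element gives an invertible
element (`isUnit_add_mul_of_isUnit`). This perturbation can be repeated, and every `y : B` is a
difference `c - (c - y)` of two invertible elements, where `c` is a scalar of large modulus. So
`1 + y * a` is invertible for every `y`, which means that `a` lies in the Jacobson radical.
-/

theorem isUnit_add_mul_of_isUnit {R : Type*} [Ring R] {a : R}
    (h : ∀ f : R, IsUnit f → IsUnit (1 + f * a)) {u f : R} (hu : IsUnit u) (hf : IsUnit f) :
    IsUnit (u + f * a) := by
  obtain ⟨u, rfl⟩ := hu
  have key : (u : R) + f * a = u * (1 + (↑u⁻¹ * f) * a) := by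
    rw [mul_add, mul_one, mul_assoc, Units.mul_inv_cancel_left]
  rw [key]
  exact u.isUnit.mul (h _ (u⁻¹.isUnit.mul hf))

theorem isUnit_one_add_of_spectralRadius_eq_zero {B : Type*} [NormedRing B] [NormedAlgebra ℂ B]
    {b : B} (hb : spectralRadius ℂ b = 0) : IsUnit (1 + b) := by
  have h : (-1 : ℂ) ∈ resolventSet ℂ b :=
    spectrum.mem_resolventSet_of_spectralRadius_lt (by simp [hb])
  rw [spectrum.mem_resolventSet_iff] at h
  simpa [sub_eq_add_neg, add_comm] using h.neg

/-- If `a` is an element of a unital complex Banach algebra `B` such that the spectral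
radius of `f * a` is zero for every invertible `f`, then `a` lies in the Jacobson
radical of `B`. -/
theorem stmt_2 {B : Type*} [NormedRing B] [NormedAlgebra ℂ B] [CompleteSpace B]
    (a : B) (h : ∀ f : B, IsUnit f → spectralRadius ℂ (f * a) = 0) :
    a ∈ (⊥ : Ideal B).jacobson := by
  have h1 : ∀ f : B, IsUnit f → IsUnit (1 + f * a) := fun f hf ↦
    isUnit_one_add_of_spectralRadius_eq_zero (h f hf)
  rw [Ideal.mem_jacobson_iff]
  intro y
  -- The factor `‖1‖` is needed because a `NormedRing` need not satisfy `‖1‖ = 1`.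
  obtain ⟨c, hc⟩ : ∃ c : ℂ, ‖y‖ * ‖(1 : B)‖ < ‖c‖ := NormedField.exists_lt_norm ℂ _
  have hc0 : c ≠ 0 := norm_pos_iff.1 (lt_of_le_of_lt (by positivity) hc)
  have hcu : IsUnit (algebraMap ℂ B c) := (IsUnit.mk0 c hc0).map _
  have hv : IsUnit (algebraMap ℂ B c - y) :=
    spectrum.mem_resolventSet_iff.1 (spectrum.mem_resolventSet_of_norm_lt_mul hc)
  have hy : IsUnit (1 + y * a) := by
    have := isUnit_add_mul_of_isUnit h1 (h1 _ hcu) hv.neg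
    convert this using 1
    noncomm_ring
  obtain ⟨z, hz⟩ := hy.exists_left_inv
  refine ⟨z, ?_⟩
  rw [Ideal.mem_bot, ← hz]
  noncomm_ring
end

section
/- Let A be a unital complex Banach algebra whose identity e_A has norm 1, let b ∈ A and let r > 0. If ‖b + r·e_A‖ ≤ r, ‖b − r·e_A‖ ≤ r, ‖b + i·r·e_A‖ ≤ r and ‖b − i·r·e_A‖ ≤ r, then b = 0. -/
/-!
The hypotheses say that `‖c + r • 1‖ ≤ r` for each `c ∈ {b, -b, I • b, -I • b}`. Writing
`exp (t • c) = e^{-tr} • exp (t • (c + r • 1))` shows that `‖exp (t • c)‖ ≤ 1` for all `t ≥ 0`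
and each such `c`. Splitting `z = x + I y` then gives `‖exp (z • b)‖ ≤ 1` for every complex `z`, so
the entire function `z ↦ exp (z • b)` is constant by Liouville's theorem, and its derivative
at `0`, which is `b`, vanishes.
-/

theorem norm_exp_le_exp_norm {A : Type*} [NormedRing A] [NormedAlgebra ℂ A] [CompleteSpace A]
    [NormOneClass A] (x : A) : ‖NormedSpace.exp x‖ ≤ Real.exp ‖x‖ := by
  rw [NormedSpace.exp_eq_tsum ℂ, Real.exp_eq_exp_ℝ, NormedSpace.exp_eq_tsum ℝ]
  have hs : Summable fun n : ℕ => ((n.factorial : ℝ)⁻¹ • ‖x‖ ^ n) :=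
    NormedSpace.expSeries_summable' (𝕂 := ℝ) ‖x‖
  refine tsum_of_norm_bounded hs.hasSum fun n => ?_
  rw [norm_smul, norm_inv, Complex.norm_natCast, smul_eq_mul]
  gcongr
  exact norm_pow_le x n

/-- An element within `r` of `-r • 1` generates a semigroup of contractions. -/
theorem norm_exp_smul_le_one {A : Type*} [NormedRing A] [NormedAlgebra ℂ A] [CompleteSpace A]
    [NormOneClass A] (c : A) (r : ℝ) (h : ‖c + (r : ℂ) • (1 : A)‖ ≤ r) (t : ℝ) (ht : 0 ≤ t) :
    ‖NormedSpace.exp ((t : ℂ) • c)‖ ≤ 1 := by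
  have key : (t : ℂ) • c
      = algebraMap ℂ A (-(t * r : ℝ)) + (t : ℂ) • (c + (r : ℂ) • (1 : A)) := by
    rw [Algebra.algebraMap_eq_smul_one]
    push_cast
    module
  let _ : NormedAlgebra ℚ A := NormedAlgebra.restrictScalars ℚ ℂ A
  rw [key, NormedSpace.exp_add_of_commute (Algebra.commutes _ _),
    ← NormedSpace.algebraMap_exp_comm, ← Complex.exp_eq_exp_ℂ]
  refine (norm_mul_le _ _).trans ?_
  rw [norm_algebraMap', ← Complex.ofReal_neg, Complex.norm_exp_ofReal]
  calc Real.exp (-(t * r)) * ‖NormedSpace.exp ((t : ℂ) • (c + (r : ℂ) • (1 : A)))‖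
      ≤ Real.exp (-(t * r)) * Real.exp (t * r) := by
        gcongr
        refine (norm_exp_le_exp_norm _).trans ?_
        rw [norm_smul, Complex.norm_real, Real.norm_of_nonneg ht]
        gcongr
    _ = 1 := by rw [← Real.exp_add]; simp

theorem norm_exp_real_smul_le_one {A : Type*} [NormedRing A] [NormedAlgebra ℂ A]
    [CompleteSpace A] [NormOneClass A] (c : A) (r : ℝ) (h : ‖c + (r : ℂ) • (1 : A)‖ ≤ r)
    (h' : ‖c - (r : ℂ) • (1 : A)‖ ≤ r) (t : ℝ) :
    ‖NormedSpace.exp ((t : ℂ) • c)‖ ≤ 1 := by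
  rcases le_total 0 t with ht | ht
  · exact norm_exp_smul_le_one c r h t ht
  · have h2 : ‖-c + (r : ℂ) • (1 : A)‖ ≤ r := by
      rwa [← norm_neg, neg_add, neg_neg, ← sub_eq_add_neg]
    simpa using norm_exp_smul_le_one (-c) r h2 (-t) (by linarith)

/-- In a unital complex Banach algebra `A` whose identity has norm one, if
`‖b ± r·1‖ ≤ r` and `‖b ± i·r·1‖ ≤ r` for some `r > 0`, then `b = 0`. -/
theorem stmt_9 {A : Type*} [NormedRing A] [NormedAlgebra ℂ A] [CompleteSpace A]
    [NormOneClass A] (b : A) (r : ℝ) (hr : 0 < r)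
    (h₁ : ‖b + (r : ℂ) • (1 : A)‖ ≤ r)
    (h₂ : ‖b - (r : ℂ) • (1 : A)‖ ≤ r)
    (h₃ : ‖b + (Complex.I * r) • (1 : A)‖ ≤ r)
    (h₄ : ‖b - (Complex.I * r) • (1 : A)‖ ≤ r) :
    b = 0 := by
  have e₃ : ‖Complex.I • b - (r : ℂ) • (1 : A)‖ ≤ r := by
    have : Complex.I • b - (r : ℂ) • (1 : A)
        = Complex.I • (b + (Complex.I * r) • (1 : A)) := by
      rw [smul_add, smul_smul, ← mul_assoc, Complex.I_mul_I]; module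
    rwa [this, norm_smul, Complex.norm_I, one_mul]
  have e₄ : ‖Complex.I • b + (r : ℂ) • (1 : A)‖ ≤ r := by
    have : Complex.I • b + (r : ℂ) • (1 : A)
        = Complex.I • (b - (Complex.I * r) • (1 : A)) := by
      rw [smul_sub, smul_smul, ← mul_assoc, Complex.I_mul_I]; module
    rwa [this, norm_smul, Complex.norm_I, one_mul]
  let _ : NormedAlgebra ℚ A := NormedAlgebra.restrictScalars ℚ ℂ A
  have bound (z : ℂ) : ‖NormedSpace.exp (z • b)‖ ≤ 1 := by
    have hz : z • b = (z.re : ℂ) • b + (z.im : ℂ) • Complex.I • b := by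
      rw [smul_smul, ← add_smul, Complex.re_add_im]
    rw [hz, NormedSpace.exp_add_of_commute
      ((((Commute.refl b).smul_right _).smul_right _).smul_left _)]
    exact (norm_mul_le _ _).trans (mul_le_one₀ (norm_exp_real_smul_le_one b r h₁ h₂ _)
      (norm_nonneg _) (norm_exp_real_smul_le_one _ r e₄ e₃ _))
  have hd (z : ℂ) : HasDerivAt (fun z : ℂ => NormedSpace.exp (z • b))
      (NormedSpace.exp (z • b) * b) z := hasDerivAt_exp_smul_const b z
  have hdiff : Differentiable ℂ fun z : ℂ => NormedSpace.exp (z • b) :=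
    fun z => (hd z).differentiableAt
  have hb : Bornology.IsBounded (Set.range fun z : ℂ => NormedSpace.exp (z • b)) :=
    isBounded_iff_forall_norm_le.2 ⟨1, by rintro _ ⟨z, rfl⟩; exact bound z⟩
  obtain ⟨a, ha⟩ := hdiff.exists_const_forall_eq_of_bounded hb
  have h0 := hd 0
  rw [funext ha] at h0
  simpa using h0.unique (hasDerivAt_const (0 : ℂ) a)
end
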